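/- Let f ∈ ℂ[x,y,z,w] be a reduced homogeneous polynomial of degree d defining a surface D: f = 0 in P³, tame with respect to the pair ρ1, ρ2 of degrees e1 ≤ e2, and set e3 = d − 1 − e1 − e2 with e3 ≥ e2. Then D is a free surface with exponents e1, e2, e3 if and only if for every k ≥ e3 one has ar(f)_k ≥ binom(k−e1+3,3) + binom(k−e2+3,3) + binom(k−e3+3,3), and in that case equality ar(f)_k = binom(k−e1+3,3) + binom(k−e2+3,3) + binom(k−e3+3,3) holds for every k ≥ e3 (with binom(m,3) = 0 for m < 3). -/

import Mathlib

open MvPolynomial Matrix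

noncomputable section

/-- The polynomial ring `S = ℂ[x,y,z,w]`. -/
abbrev S4 : Type := MvPolynomial (Fin 4) ℂ

/-- The `S`-linear map sending `ρ = (α,β,γ,δ)` to `α fₓ + β f_y + γ f_z + δ f_w`. -/
def jacPair (f : S4) : (Fin 4 → S4) →ₗ[S4] S4 where
  toFun ρ := ∑ i, ρ i * pderiv i f
  map_add' a b := by simp [add_mul, Finset.sum_add_distrib]
  map_smul' c a := by simp [Finset.mul_sum, mul_assoc]

/-- `AR(f)`: the `S`-module of all Jacobian syzygies of `f`. -/
def AR4 (f : S4) : Submodule S4 (Fin 4 → S4) := LinearMap.ker (jacPair f)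

/-- A vector of polynomials is homogeneous of degree `q` if each component is. -/
def VecHomog (ρ : Fin 4 → S4) (q : ℕ) : Prop := ∀ i, (ρ i).IsHomogeneous q

/-- `AR(f)_k`, the degree-`k` homogeneous part of `AR(f)`, as a `ℂ`-subspace. -/
def ARgr (f : S4) (k : ℕ) : Submodule ℂ (Fin 4 → S4) :=
  (AR4 f).restrictScalars ℂ ⊓ Submodule.pi Set.univ (fun _ => homogeneousSubmodule (Fin 4) ℂ k)

/-- `ar(f)_k = dim_ℂ AR(f)_k`. -/
def arDim (f : S4) (k : ℕ) : ℕ := Module.finrank ℂ (ARgr f k)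

/-- `ar(f)_q` for an integer index, with the convention that it vanishes for `q < 0`. -/
def arZ (f : S4) (q : ℤ) : ℕ := if 0 ≤ q then arDim f q.toNat else 0

/-- The Jacobian ideal of `f`. -/
def JacIdeal (f : S4) : Ideal S4 := Ideal.span (Set.range fun i : Fin 4 => pderiv i f)

/-- `m(f)_k = dim_ℂ M(f)_k`, the dimension of the degree-`k` part of the Milnor algebra. -/
def milnor4 (f : S4) (k : ℕ) : ℕ :=
  Module.finrank ℂ ((homogeneousSubmodule (Fin 4) ℂ k).map
    (Submodule.mkQ ((JacIdeal f).restrictScalars ℂ)))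

/-- `binom(m,3)` with the convention that it is `0` for `m < 3`. -/
def binom3 (m : ℤ) : ℕ := m.toNat.choose 3

/-- All four `3×3` minors of the `3×4` matrix with rows `ρ1, ρ2, ρ` vanish. -/
def MinorsVanish3 (ρ1 ρ2 ρ : Fin 4 → S4) : Prop :=
  ∀ j : Fin 4,
    (Matrix.of fun i k => ![ρ1, ρ2, ρ] i (j.succAbove k) : Matrix (Fin 3) (Fin 3) S4).det = 0

/-- `D : f = 0` is tame with respect to `ρ1, ρ2`: every homogeneous syzygy `ρ` for which all
`3×3` minors of the matrix with rows `ρ1, ρ2, ρ` vanish lies in `S·ρ1 + S·ρ2`. -/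
def TamePair (f : S4) (ρ1 ρ2 : Fin 4 → S4) : Prop :=
  ∀ ρ ∈ AR4 f, ∀ q : ℕ, VecHomog ρ q → MinorsVanish3 ρ1 ρ2 ρ →
    ∃ a b : S4, ρ = a • ρ1 + b • ρ2

/-- `ρ1` is a nonzero homogeneous syzygy of minimal degree `e1`, and `ρ2` is a homogeneous
syzygy of minimal degree `e2 ≥ e1` among the homogeneous syzygies not in `S·ρ1`. -/
def MinimalPair (f : S4) (ρ1 ρ2 : Fin 4 → S4) (e1 e2 : ℕ) : Prop :=
  ρ1 ∈ AR4 f ∧ ρ1 ≠ 0 ∧ VecHomog ρ1 e1 ∧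
  (∀ ρ ∈ AR4 f, ∀ q : ℕ, ρ ≠ 0 → VecHomog ρ q → e1 ≤ q) ∧
  ρ2 ∈ AR4 f ∧ VecHomog ρ2 e2 ∧ e1 ≤ e2 ∧ (∀ a : S4, ρ2 ≠ a • ρ1) ∧
  (∀ ρ ∈ AR4 f, ∀ q : ℕ, VecHomog ρ q → (∀ a : S4, ρ ≠ a • ρ1) → e2 ≤ q)

/-- `D : f = 0` is a free surface with exponents `d1 ≤ d2 ≤ d3`: `AR(f)` is a free graded
`S`-module with a homogeneous basis of degrees `d1, d2, d3`. -/
def IsFreeWith (f : S4) (d1 d2 d3 : ℕ) : Prop :=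
  d1 ≤ d2 ∧ d2 ≤ d3 ∧
  ∃ ρ1 ρ2 ρ3 : Fin 4 → S4,
    ρ1 ∈ AR4 f ∧ ρ2 ∈ AR4 f ∧ ρ3 ∈ AR4 f ∧
    VecHomog ρ1 d1 ∧ VecHomog ρ2 d2 ∧ VecHomog ρ3 d3 ∧
    (∀ ρ ∈ AR4 f, ∃ a b c : S4, ρ = a • ρ1 + b • ρ2 + c • ρ3) ∧
    (∀ a b c : S4, a • ρ1 + b • ρ2 + c • ρ3 = 0 → a = 0 ∧ b = 0 ∧ c = 0)

/-- `D : f = 0` is a nearly free surface with exponents `d1 ≤ d2 ≤ d3` (`d4 = d3`):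
`AR(f)` is generated by four homogeneous syzygies of degrees `d1, d2, d3, d3`,
with `d3 = d - (d1 + d2)`, whose module of relations is generated by a single relation
`a₁ρ₁ + a₂ρ₂ + a₃ρ₃ + a₄ρ₄ = 0` with `a₁, a₂, a₃, a₄` homogeneous of degrees
`d3-d1+1, d3-d2+1, 1, 1`. -/
def IsNearlyFreeWith (f : S4) (d d1 d2 d3 : ℕ) : Prop :=
  d1 ≤ d2 ∧ d2 ≤ d3 ∧ d1 + d2 + d3 = d ∧
  ∃ (ρ : Fin 4 → Fin 4 → S4) (a : Fin 4 → S4),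
    (∀ i, ρ i ∈ AR4 f) ∧
    VecHomog (ρ 0) d1 ∧ VecHomog (ρ 1) d2 ∧ VecHomog (ρ 2) d3 ∧ VecHomog (ρ 3) d3 ∧
    (∀ σ ∈ AR4 f, ∃ b : Fin 4 → S4, σ = ∑ i, b i • ρ i) ∧
    (a 0).IsHomogeneous (d3 - d1 + 1) ∧ (a 1).IsHomogeneous (d3 - d2 + 1) ∧
    (a 2).IsHomogeneous 1 ∧ (a 3).IsHomogeneous 1 ∧
    a ≠ 0 ∧ (∑ i, a i • ρ i) = 0 ∧
    (∀ b : Fin 4 → S4, (∑ i, b i • ρ i) = 0 → ∃ c : S4, b = c • a)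

/-- `D : f = 0` is tame: it is tame with respect to some pair `ρ1, ρ2` chosen as in the paper. -/
def IsTame (f : S4) : Prop :=
  ∃ (ρ1 ρ2 : Fin 4 → S4) (e1 e2 : ℕ), MinimalPair f ρ1 ρ2 e1 e2 ∧ TamePair f ρ1 ρ2

/-- The `4×4` matrix with rows the Euler vector field `(x,y,z,w)` and `ρ1, ρ2, ρ`. -/
def EMat (ρ1 ρ2 ρ : Fin 4 → S4) : Matrix (Fin 4) (Fin 4) S4 :=
  Matrix.of ![fun i => X i, ρ1, ρ2, ρ]

/-!
Stack the Euler vector field and three homogeneous syzygies of degrees `e₁, e₂, e₃` into a square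
matrix `A`. It sends the gradient of `f` to `(d f, 0, 0, 0)`, so `f` divides `(det A) ∂ᵢf` for all
`i`, and hence `f ∣ det A` because `f` is squarefree. Since `e₁ + e₂ + e₃ + 1 = d`, both sides have
degree `d`, so `det A` is either zero or a scalar multiple of `f`; in the second case Cramer's rule
writes every syzygy in terms of the three given ones. If `ar(f)_k` reaches the expected value at
`k = e₃`, the syzygies `ρ₁, ρ₂` cannot account for all of `AR(f)_k`, and for a syzygy outside their
span tameness rules out `det A = 0`. The surface is therefore free, and then `ar(f)_k` takes the
expected value for every `k`.
-/

section PartialDerivatives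
variable {R K σ : Type*} [CommSemiring R] [Field K]

theorem totalDegree_pderiv_lt {p : MvPolynomial σ R} {i : σ} (hp : pderiv i p ≠ 0) :
    (pderiv i p).totalDegree < p.totalDegree := by
  have degree_lt : ∀ m ∈ (pderiv i p).support, m.degree < p.totalDegree := by
    intro m hm
    have hcoeff : coeff (m + Finsupp.single i 1) p ≠ 0 := by
      rw [mem_support_iff, coeff_pderiv] at hm
      exact left_ne_zero_of_mul hm
    have hle : (m + Finsupp.single i 1).degree ≤ p.totalDegree :=
      le_totalDegree (mem_support_iff.mpr hcoeff)
    rw [map_add, Finsupp.degree_single] at hle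
    lia
  obtain ⟨m, hm⟩ := support_nonempty.mpr hp
  exact (Finset.sup_lt_iff ((Nat.zero_le _).trans_lt (degree_lt m hm))).mpr degree_lt

theorem coeff_eq_zero_of_pderiv_eq_zero [NoZeroDivisors R] [CharZero R] {p : MvPolynomial σ R}
    {i : σ}
    (hp : pderiv i p = 0) {m : σ →₀ ℕ} (hm : m i ≠ 0) : coeff m p = 0 := by
  have hcoeff := coeff_pderiv (i := i) p (m - Finsupp.single i 1)
  rw [hp, coeff_zero, Finsupp.sub_add_single_one_cancel hm] at hcoeff
  exact (mul_eq_zero.mp hcoeff.symm).resolve_right (Nat.cast_add_one_ne_zero _)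

theorem isUnit_of_forall_dvd_pderiv [CharZero K] {p : MvPolynomial σ K} (hp : p ≠ 0)
    (hdvd : ∀ i, p ∣ pderiv i p) : IsUnit p := by
  have hzero (i : σ) : pderiv i p = 0 := by
    by_contra hne
    exact (totalDegree_le_of_dvd_of_isDomain (hdvd i) hne).not_gt (totalDegree_pderiv_lt hne)
  have hconst : p = C (coeff 0 p) := by
    classical
    ext m
    rw [coeff_C]
    split_ifs with hm
    · rw [hm]
    · obtain ⟨i, hi⟩ := Finsupp.ne_iff.mp (Ne.symm hm)
      exact coeff_eq_zero_of_pderiv_eq_zero (hzero i) hi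
  rw [hconst] at hp ⊢
  exact (IsUnit.mk0 _ (C_ne_zero.mp hp)).map C

theorem dvd_of_forall_dvd_mul_pderiv [CharZero K] {f q : MvPolynomial σ K} (hf : Squarefree f)
    (hdvd : ∀ i, f ∣ q * pderiv i f) : f ∣ q := by
  obtain ⟨h, q', g, hrel, rfl, rfl⟩ :=
    UniqueFactorizationMonoid.exists_reduced_factors f hf.ne_zero q
  have hh_dvd (i : σ) : h ∣ pderiv i h := by
    have hmul : g * h ∣ g * (q' * pderiv i (g * h)) := by
      simpa only [mul_assoc] using hdvd i
    have hdvd_pderiv : h ∣ pderiv i (g * h) :=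
      hrel.dvd_of_dvd_mul_left ((mul_dvd_mul_iff_left (left_ne_zero_of_mul hf.ne_zero)).mp hmul)
    rw [pderiv_mul] at hdvd_pderiv
    exact (squarefree_mul_iff.mp hf).1.symm.dvd_of_dvd_mul_left
      ((dvd_add_right (dvd_mul_left h _)).mp hdvd_pderiv)
  exact mul_dvd_mul_left g
    (isUnit_of_forall_dvd_pderiv (right_ne_zero_of_mul hf.ne_zero) hh_dvd).dvd

end PartialDerivatives

section Homogeneous
variable {σ : Type*}

theorem associated_of_dvd_of_isHomogeneous {K : Type*} [Field K] {p q : MvPolynomial σ K} {d : ℕ}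
    (hp : p.IsHomogeneous d) (hq : q.IsHomogeneous d) (hq0 : q ≠ 0) (hdvd : p ∣ q) :
    Associated p q := by
  obtain ⟨u, rfl⟩ := hdvd
  have hp0 : p ≠ 0 := left_ne_zero_of_mul hq0
  have hu0 : u ≠ 0 := right_ne_zero_of_mul hq0
  have hdeg : u.totalDegree = 0 := by
    have := hq.totalDegree hq0
    rw [totalDegree_mul_of_isDomain hp0 hu0, hp.totalDegree hp0] at this
    lia
  have hu := totalDegree_eq_zero_iff_eq_C.mp hdeg
  rw [hu] at hu0 ⊢
  exact associated_mul_unit_right p _ ((IsUnit.mk0 _ (C_ne_zero.mp hu0)).map C)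

theorem isHomogeneous_det {R n : Type*} [CommRing R] [Fintype n] [DecidableEq n]
    {A : Matrix n n (MvPolynomial σ R)} {e : n → ℕ} (hA : ∀ i j, (A i j).IsHomogeneous (e i)) :
    A.det.IsHomogeneous (∑ i, e i) := by
  rw [det_apply]
  refine IsHomogeneous.sum _ _ _ fun τ _ => ?_
  have hprod : (∏ i, A (τ i) i).IsHomogeneous (∑ i, e i) := by
    rw [← Equiv.sum_comp τ e]
    exact IsHomogeneous.prod _ _ _ fun i _ => hA (τ i) i
  rw [Units.smul_def]
  exact zsmul_mem (K := homogeneousSubmodule σ R (∑ i, e i)) hprod _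

end Homogeneous

section Cramer
variable {R n : Type*} [CommRing R] [Fintype n] [DecidableEq n]

theorem dvd_det_mul_of_forall_dvd_mulVec {A : Matrix n n R} {v : n → R} {a : R}
    (h : ∀ i, a ∣ (A *ᵥ v) i) (j : n) : a ∣ A.det * v j := by
  have hadj : A.det * v j = ∑ i, A.adjugate j i * (A *ᵥ v) i := by
    have : A.adjugate *ᵥ (A *ᵥ v) = A.det • v := by
      rw [mulVec_mulVec, adjugate_mul, smul_mulVec, one_mulVec]
    exact (congrFun this j).symm
  exact hadj ▸ Finset.dvd_sum fun i _ => (h i).mul_left _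

theorem det_smul_eq_sum_det_updateRow_smul (A : Matrix n n R) (v : n → R) :
    A.det • v = ∑ i, (A.updateRow i v).det • A i := by
  rw [← det_transpose, ← mulVec_cramer, mulVec_eq_sum]
  simp only [cramer_transpose_apply, op_smul_eq_smul, transpose_transpose]

end Cramer

section GradedPieces
variable {R σ ι J : Type*} [CommSemiring R]

/-- The degree-`k` part of a submodule `M` of a free module over a polynomial ring, consisting of
the vectors in `M` all of whose components are homogeneous of degree `k`. -/
def gradedPiece (M : Submodule (MvPolynomial σ R) (ι → MvPolynomial σ R)) (k : ℕ) :
    Submodule R (ι → MvPolynomial σ R) :=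
  M.restrictScalars R ⊓ Submodule.pi Set.univ fun _ => homogeneousSubmodule σ R k

theorem mem_gradedPiece {M : Submodule (MvPolynomial σ R) (ι → MvPolynomial σ R)} {k : ℕ}
    {v : ι → MvPolynomial σ R} :
    v ∈ gradedPiece M k ↔ v ∈ M ∧ ∀ i, (v i).IsHomogeneous k := by
  simp [gradedPiece, Submodule.mem_pi]

variable (R σ) in
/-- The degree-`k` part of the twist `S(-e)` of the polynomial ring `S`: the homogeneous
polynomials of degree `k - e`, where the case `k < e` is split off because subtraction in `ℕ`
truncates. -/
def twistPiece (e k : ℕ) : Submodule R (MvPolynomial σ R) :=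
  if e ≤ k then homogeneousSubmodule σ R (k - e) else ⊥

theorem twistPiece_of_le {e k : ℕ} (h : e ≤ k) :
    twistPiece R σ e k = homogeneousSubmodule σ R (k - e) :=
  if_pos h

theorem twistPiece_of_lt {e k : ℕ} (h : k < e) : twistPiece R σ e k = ⊥ :=
  if_neg h.not_ge

instance finite_twistPiece [Finite σ] (e k : ℕ) : Module.Finite R (twistPiece R σ e k) := by
  rcases le_or_gt e k with hek | hek
  · rw [twistPiece_of_le hek]
    exact Module.Finite.iff_fg.mpr (homogeneousSubmodule_fg σ R (k - e))
  · rw [twistPiece_of_lt hek]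
    infer_instance

theorem isHomogeneous_mul_of_mem_twistPiece {a r : MvPolynomial σ R} {e k : ℕ}
    (ha : a ∈ twistPiece R σ e k) (hr : r.IsHomogeneous e) : (a * r).IsHomogeneous k := by
  rcases le_or_gt e k with hek | hek
  · rw [twistPiece_of_le hek] at ha
    exact Nat.sub_add_cancel hek ▸ IsHomogeneous.mul ha hr
  · rw [twistPiece_of_lt hek, Submodule.mem_bot] at ha
    rw [ha, zero_mul]
    exact isHomogeneous_zero σ R k

theorem exists_mem_twistPiece_homogeneousComponent_mul (a : MvPolynomial σ R) (e k : ℕ) :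
    ∃ c ∈ twistPiece R σ e k, ∀ r : MvPolynomial σ R, r.IsHomogeneous e →
      homogeneousComponent k (a * r) = c * r := by
  let _ := MvPolynomial.gradedAlgebra (σ := σ) (R := R)
  have decompose_eq (p : MvPolynomial σ R) (n : ℕ) :
      (DirectSum.decompose (homogeneousSubmodule σ R) p n : MvPolynomial σ R) =
        homogeneousComponent n p :=
    decomposition.decompose'_apply p n
  rcases le_or_gt e k with hek | hek
  · refine ⟨homogeneousComponent (k - e) a, ?_, fun r hr => ?_⟩
    · rw [twistPiece_of_le hek]
      exact homogeneousComponent_mem (k - e) a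
    · simpa only [decompose_eq] using
        DirectSum.coe_decompose_mul_of_right_mem_of_le (homogeneousSubmodule σ R)
          (a := a) hr hek
  · refine ⟨0, zero_mem _, fun r hr => ?_⟩
    simpa only [decompose_eq, zero_mul] using
      DirectSum.coe_decompose_mul_of_right_mem_of_not_le (homogeneousSubmodule σ R)
        (a := a) hr hek.not_ge

variable [Fintype J]

/-- The degree-`k` part of the map `⨁ⱼ S(-eⱼ) → S^ι` that sends the `j`-th basis vector to `ρ j`. -/
def twistCombination (ρ : J → ι → MvPolynomial σ R) (e : J → ℕ) (k : ℕ) :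
    (∀ j, twistPiece R σ (e j) k) →ₗ[R] ι → MvPolynomial σ R :=
  (Fintype.linearCombination (MvPolynomial σ R) ρ).restrictScalars R ∘ₗ
    LinearMap.piMap fun j => (twistPiece R σ (e j) k).subtype

theorem twistCombination_apply (ρ : J → ι → MvPolynomial σ R) (e : J → ℕ) (k : ℕ)
    (a : ∀ j, twistPiece R σ (e j) k) :
    twistCombination ρ e k a = ∑ j, (a j : MvPolynomial σ R) • ρ j := rfl

variable {ρ : J → ι → MvPolynomial σ R} {e : J → ℕ}

theorem range_twistCombination (hρ : ∀ j i, (ρ j i).IsHomogeneous (e j)) (k : ℕ) :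
    LinearMap.range (twistCombination ρ e k) =
      gradedPiece (Submodule.span (MvPolynomial σ R) (Set.range ρ)) k := by
  ext v
  rw [mem_gradedPiece, Submodule.mem_span_range_iff_exists_fun]
  constructor
  · rintro ⟨a, rfl⟩
    refine ⟨⟨fun j => a j, rfl⟩, fun i => ?_⟩
    rw [twistCombination_apply, Finset.sum_apply]
    exact IsHomogeneous.sum _ _ _ fun j _ =>
      isHomogeneous_mul_of_mem_twistPiece (a j).2 (hρ j i)
  · rintro ⟨⟨a, rfl⟩, hv⟩
    choose c hc hcomp using fun j => exists_mem_twistPiece_homogeneousComponent_mul (a j) (e j) k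
    refine ⟨fun j => ⟨c j, hc j⟩, funext fun i => ?_⟩
    rw [← homogeneousComponent_eq_self (hv i), twistCombination_apply]
    simp only [Finset.sum_apply, Pi.smul_apply, smul_eq_mul, map_sum, hcomp _ _ (hρ _ i)]

theorem twistCombination_injective (hρ : LinearIndependent (MvPolynomial σ R) ρ) (k : ℕ) :
    Function.Injective (twistCombination ρ e k) :=
  hρ.fintypeLinearCombination_injective.comp
    (Function.Injective.piMap fun _ => Subtype.val_injective)

end GradedPieces

section HilbertFunction
variable {K : Type*} [Field K]

theorem finrank_homogeneousSubmodule {σ : Type*} [Fintype σ] (k : ℕ) :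
    Module.finrank K (homogeneousSubmodule σ K k) = (Fintype.card σ).multichoose k := by
  classical
  have hsupport : homogeneousSubmodule σ K k = restrictSupport K {m | m.degree = k} :=
    homogeneousSubmodule_eq_finsupp_supported σ K k
  have hset : {m : σ →₀ ℕ | m.degree = k} = (Finset.univ : Finset σ).finsuppAntidiag k := by
    ext m
    simp [Finset.mem_finsuppAntidiag, Finsupp.degree_eq_sum]
  rw [hsupport, Module.finrank_eq_nat_card_basis (basisRestrictSupport K _), hset,
    Nat.card_coe_set_eq, Set.ncard_coe_finset, Finset.card_finsuppAntidiag_nat_eq_multichoose,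
    Finset.card_univ]

theorem finrank_twistPiece (n e k : ℕ) :
    Module.finrank K (twistPiece K (Fin (n + 2)) e k) = (k + (n + 1) - e).choose (n + 1) := by
  rcases le_or_gt e k with hek | hek
  · rw [twistPiece_of_le hek, finrank_homogeneousSubmodule, Fintype.card_fin, Nat.multichoose_eq,
      show n + 2 + (k - e) - 1 = k - e + (n + 1) by lia,
      show k + (n + 1) - e = k - e + (n + 1) by lia, Nat.choose_symm_add]
  · rw [twistPiece_of_lt hek, finrank_bot, Nat.choose_eq_zero_of_lt (by lia)]

variable {n : ℕ} {ι J : Type*} [Fintype J] {ρ : J → ι → MvPolynomial (Fin (n + 2)) K} {e : J → ℕ}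

theorem finrank_gradedPiece_span (hρ : ∀ j i, (ρ j i).IsHomogeneous (e j))
    (hli : LinearIndependent (MvPolynomial (Fin (n + 2)) K) ρ) (k : ℕ) :
    Module.finrank K
        (gradedPiece (Submodule.span (MvPolynomial (Fin (n + 2)) K) (Set.range ρ)) k) =
      ∑ j, (k + (n + 1) - e j).choose (n + 1) := by
  rw [← range_twistCombination hρ,
    LinearMap.finrank_range_of_inj (twistCombination_injective hli k), Module.finrank_pi_fintype]
  simp only [finrank_twistPiece]

theorem exists_mem_gradedPiece_notMem_span
    {M : Submodule (MvPolynomial (Fin (n + 2)) K) (ι → MvPolynomial (Fin (n + 2)) K)} {k : ℕ}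
    (hρ : ∀ j i, (ρ j i).IsHomogeneous (e j))
    (hdim : ∑ j, (k + (n + 1) - e j).choose (n + 1) < Module.finrank K (gradedPiece M k)) :
    ∃ v ∈ gradedPiece M k, v ∉ Submodule.span (MvPolynomial (Fin (n + 2)) K) (Set.range ρ) := by
  by_contra! hmem
  have hle : gradedPiece M k ≤ LinearMap.range (twistCombination ρ e k) := by
    rw [range_twistCombination hρ]
    exact fun v hv => mem_gradedPiece.mpr ⟨hmem v hv, (mem_gradedPiece.mp hv).2⟩
  have hupper := (Submodule.finrank_mono hle).trans (LinearMap.finrank_range_le _)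
  rw [Module.finrank_pi_fintype] at hupper
  simp only [finrank_twistPiece] at hupper
  exact hdim.not_ge hupper

end HilbertFunction

section JacobianSyzygies
variable {R σ : Type*} [CommRing R]

/-- The vector of all partial derivatives of a polynomial, that is, its formal gradient. -/
def partials (f : MvPolynomial σ R) : σ → MvPolynomial σ R := fun i => pderiv i f

variable [Fintype σ]

/-- The module `AR(f)` of Jacobian syzygies, in any number of variables. -/
def jacobianSyzygies (f : MvPolynomial σ R) :
    Submodule (MvPolynomial σ R) (σ → MvPolynomial σ R) :=
  LinearMap.ker (Fintype.linearCombination (MvPolynomial σ R) (partials f))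

theorem mem_jacobianSyzygies {f : MvPolynomial σ R} {v : σ → MvPolynomial σ R} :
    v ∈ jacobianSyzygies f ↔ v ⬝ᵥ partials f = 0 := Iff.rfl

/-- The hypersurface `f = 0` is free with exponents `e`: the module `AR(f)` has a basis of
homogeneous syzygies whose degrees are given by `e`, in any order. -/
def HasFreeExponents {J : Type*} (f : MvPolynomial σ R) (e : J → ℕ) : Prop :=
  ∃ ρ : J → σ → MvPolynomial σ R, (∀ j i, (ρ j i).IsHomogeneous (e j)) ∧
    LinearIndependent (MvPolynomial σ R) ρ ∧
    Submodule.span (MvPolynomial σ R) (Set.range ρ) = jacobianSyzygies f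

theorem X_dotProduct_partials {f : MvPolynomial σ R} {d : ℕ} (hf : f.IsHomogeneous d) :
    X ⬝ᵥ partials f = d • f :=
  hf.sum_X_mul_pderiv

theorem det_eq_zero_of_mulVec_partials_eq_zero [DecidableEq σ] [IsDomain R] [CharZero R]
    {f : MvPolynomial σ R} {d : ℕ} (hd : d ≠ 0) (hf : f.IsHomogeneous d) (hf0 : f ≠ 0)
    {A : Matrix σ σ (MvPolynomial σ R)} (hA : A *ᵥ partials f = 0) : A.det = 0 := by
  refine exists_mulVec_eq_zero_iff.mp ⟨partials f, fun hzero => ?_, hA⟩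
  have heuler := X_dotProduct_partials hf
  rw [hzero, dotProduct_zero] at heuler
  exact smul_ne_zero hd hf0 heuler.symm

theorem dvd_det_of_forall_dvd_mulVec_partials {K : Type*} [Field K] [CharZero K] [DecidableEq σ]
    {f : MvPolynomial σ K} (hf : Squarefree f) {A : Matrix σ σ (MvPolynomial σ K)}
    (hA : ∀ i, f ∣ (A *ᵥ partials f) i) : f ∣ A.det :=
  dvd_of_forall_dvd_mul_pderiv hf (dvd_det_mul_of_forall_dvd_mulVec hA)

end JacobianSyzygies

section EulerMatrix
variable {R : Type*} [CommRing R] {m d : ℕ} {f : MvPolynomial (Fin (m + 1)) R}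
  {ρ : Fin m → Fin (m + 1) → MvPolynomial (Fin (m + 1)) R}

/-- All maximal minors of the `m × (m + 1)` matrix with rows `ρ i` vanish. -/
def MinorsVanish {A : Type*} [CommRing A] (ρ : Fin m → Fin (m + 1) → A) : Prop :=
  ∀ j : Fin (m + 1), ((of ρ).submatrix id j.succAbove).det = 0

/-- The square matrix of Saito's criterion, whose first row is the Euler vector field
`(x₀, …, xₘ)` and whose other rows are the `ρ i`. -/
def eulerMatrix (ρ : Fin m → Fin (m + 1) → MvPolynomial (Fin (m + 1)) R) :
    Matrix (Fin (m + 1)) (Fin (m + 1)) (MvPolynomial (Fin (m + 1)) R) :=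
  of (vecCons X ρ)

theorem eulerMatrix_mulVec_partials (hf : f.IsHomogeneous d)
    (hρ : ∀ i, ρ i ∈ jacobianSyzygies f) :
    eulerMatrix ρ *ᵥ partials f = Pi.single 0 (d • f) := by
  funext i
  refine Fin.cases ?_ (fun i => ?_) i
  · exact X_dotProduct_partials hf
  · exact mem_jacobianSyzygies.mp (hρ i)

theorem dvd_eulerMatrix_mulVec_partials (hf : f.IsHomogeneous d)
    (hρ : ∀ i, ρ i ∈ jacobianSyzygies f) (i : Fin (m + 1)) :
    f ∣ (eulerMatrix ρ *ᵥ partials f) i := by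
  rw [eulerMatrix_mulVec_partials hf hρ, Pi.single_apply]
  split_ifs
  · exact dvd_nsmul_of_dvd d dvd_rfl
  · exact dvd_zero f

theorem isHomogeneous_det_eulerMatrix {e : Fin m → ℕ}
    (hρ : ∀ i j, (ρ i j).IsHomogeneous (e i)) :
    (eulerMatrix ρ).det.IsHomogeneous (∑ i, e i + 1) := by
  have hrows : ∀ i j, (eulerMatrix ρ i j).IsHomogeneous (vecCons 1 e i) :=
    Fin.cases (isHomogeneous_X R) hρ
  simpa [Fin.sum_univ_succ, add_comm] using isHomogeneous_det hrows

variable [IsDomain R]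

theorem linearIndependent_of_det_eulerMatrix_ne_zero (hdet : (eulerMatrix ρ).det ≠ 0) :
    LinearIndependent (MvPolynomial (Fin (m + 1)) R) ρ :=
  (linearIndependent_rows_of_det_ne_zero hdet).comp Fin.succ (Fin.succ_injective m)

variable [CharZero R]

theorem minorsVanish_of_det_eulerMatrix_eq_zero (hd : d ≠ 0) (hf : f.IsHomogeneous d)
    (hf0 : f ≠ 0) (hρ : ∀ i, ρ i ∈ jacobianSyzygies f) (hdet : (eulerMatrix ρ).det = 0) :
    MinorsVanish ρ := by
  intro j
  have hcol : (eulerMatrix ρ).adjugate *ᵥ Pi.single 0 (d • f) = 0 := by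
    rw [← eulerMatrix_mulVec_partials hf hρ, mulVec_mulVec, adjugate_mul, hdet, zero_smul,
      zero_mulVec]
  have hentry : (eulerMatrix ρ).adjugate j 0 * (d • f) = 0 := by
    rw [mulVec_single] at hcol
    exact congrFun hcol j
  have hadj := (mul_eq_zero.mp hentry).resolve_right (smul_ne_zero hd hf0)
  rw [adjugate_fin_succ_eq_det_submatrix] at hadj
  exact (mul_eq_zero.mp hadj).resolve_left (pow_ne_zero _ (neg_ne_zero.mpr one_ne_zero))

theorem det_eulerMatrix_smul_eq_sum (hd : d ≠ 0) (hf : f.IsHomogeneous d) (hf0 : f ≠ 0)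
    (hρ : ∀ i, ρ i ∈ jacobianSyzygies f) {v : Fin (m + 1) → MvPolynomial (Fin (m + 1)) R}
    (hv : v ∈ jacobianSyzygies f) :
    (eulerMatrix ρ).det • v = ∑ i : Fin m, ((eulerMatrix ρ).updateRow i.succ v).det • ρ i := by
  have hzero : ((eulerMatrix ρ).updateRow 0 v).det = 0 := by
    apply det_eq_zero_of_mulVec_partials_eq_zero hd hf hf0
    rw [updateRow_mulVec, eulerMatrix_mulVec_partials hf hρ, mem_jacobianSyzygies.mp hv]
    exact Function.update_eq_iff.mpr ⟨rfl, fun i hi => Pi.single_eq_of_ne hi _⟩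
  rw [det_smul_eq_sum_det_updateRow_smul, Fin.sum_univ_succ, hzero, zero_smul, zero_add]
  rfl

end EulerMatrix

section SaitoCriterion
variable {K : Type*} [Field K] [CharZero K] {m : ℕ} {f : MvPolynomial (Fin (m + 1)) K}
  {ρ : Fin m → Fin (m + 1) → MvPolynomial (Fin (m + 1)) K} {e : Fin m → ℕ}

theorem span_range_eq_jacobianSyzygies_of_det_eulerMatrix_ne_zero
    (hf : f.IsHomogeneous (∑ i, e i + 1)) (hred : Squarefree f)
    (hρ : ∀ i, ρ i ∈ jacobianSyzygies f) (hhom : ∀ i j, (ρ i j).IsHomogeneous (e i))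
    (hdet : (eulerMatrix ρ).det ≠ 0) :
    Submodule.span (MvPolynomial (Fin (m + 1)) K) (Set.range ρ) = jacobianSyzygies f := by
  have hdvd := dvd_eulerMatrix_mulVec_partials hf hρ
  obtain ⟨u, hu⟩ : Associated f (eulerMatrix ρ).det :=
    associated_of_dvd_of_isHomogeneous hf (isHomogeneous_det_eulerMatrix hhom) hdet
      (dvd_det_of_forall_dvd_mulVec_partials hred hdvd)
  refine le_antisymm (Submodule.span_le.mpr (Set.range_subset_iff.mpr hρ)) fun v hv => ?_
  have hdvd_update (i : Fin m) : f ∣ ((eulerMatrix ρ).updateRow i.succ v).det := by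
    refine dvd_det_of_forall_dvd_mulVec_partials hred fun k => ?_
    rw [updateRow_mulVec, mem_jacobianSyzygies.mp hv, Function.update_apply]
    split_ifs
    · exact dvd_zero f
    · exact hdvd k
  choose c hc using hdvd_update
  have hcomb : f • ((u : MvPolynomial (Fin (m + 1)) K) • v) = f • ∑ i, c i • ρ i := by
    rw [smul_smul, hu, det_eulerMatrix_smul_eq_sum (Nat.succ_ne_zero _) hf hred.ne_zero hρ hv,
      Finset.smul_sum]
    simp only [hc, smul_smul]
  rw [← Submodule.smul_mem_iff_of_isUnit _ u.isUnit, smul_right_injective _ hred.ne_zero hcomb]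
  exact Submodule.sum_smul_mem _ _ fun i _ => Submodule.subset_span (Set.mem_range_self i)

theorem hasFreeExponents_of_not_minorsVanish (hf : f.IsHomogeneous (∑ i, e i + 1))
    (hred : Squarefree f) (hρ : ∀ i, ρ i ∈ jacobianSyzygies f)
    (hhom : ∀ i j, (ρ i j).IsHomogeneous (e i)) (hminors : ¬ MinorsVanish ρ) :
    HasFreeExponents f e := by
  have hdet : (eulerMatrix ρ).det ≠ 0 :=
    mt (minorsVanish_of_det_eulerMatrix_eq_zero (Nat.succ_ne_zero _) hf hred.ne_zero hρ) hminors
  exact ⟨ρ, hhom, linearIndependent_of_det_eulerMatrix_ne_zero hdet,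
    span_range_eq_jacobianSyzygies_of_det_eulerMatrix_ne_zero hf hred hρ hhom hdet⟩

end SaitoCriterion

section Tame
variable {n : ℕ}

/-- The hypersurface `f = 0` in `n + 2` variables is tame with respect to `n` vectors `ρ i`: every
homogeneous syzygy `v` for which the maximal minors of the matrix with rows `ρ 0, …, ρ (n - 1), v`
vanish lies in the span of the `ρ i`. -/
def TameFamily {R : Type*} [CommRing R] (f : MvPolynomial (Fin (n + 2)) R)
    (ρ : Fin n → Fin (n + 2) → MvPolynomial (Fin (n + 2)) R) : Prop :=
  ∀ v ∈ jacobianSyzygies f, ∀ q : ℕ, (∀ i, (v i).IsHomogeneous q) →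
    MinorsVanish (Fin.snoc ρ v : Fin (n + 1) → Fin (n + 2) → MvPolynomial (Fin (n + 2)) R) →
    v ∈ Submodule.span (MvPolynomial (Fin (n + 2)) R) (Set.range ρ)

theorem cor_3_4_b_general {K : Type*} [Field K] [CharZero K] {f : MvPolynomial (Fin (n + 2)) K}
    {ρ : Fin n → Fin (n + 2) → MvPolynomial (Fin (n + 2)) K} {e : Fin (n + 1) → ℕ}
    (hf : f.IsHomogeneous (∑ i, e i + 1)) (hred : Squarefree f)
    (hρ : ∀ i, ρ i ∈ jacobianSyzygies f)
    (hhom : ∀ i j, (ρ i j).IsHomogeneous (e i.castSucc)) (htame : TameFamily f ρ) :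
    List.TFAE [HasFreeExponents f e,
      ∀ k, Module.finrank K (gradedPiece (jacobianSyzygies f) k) =
        ∑ i, (k + (n + 1) - e i).choose (n + 1),
      ∀ k, e (Fin.last n) ≤ k → ∑ i, (k + (n + 1) - e i).choose (n + 1) ≤
        Module.finrank K (gradedPiece (jacobianSyzygies f) k),
      ∑ i, (e (Fin.last n) + (n + 1) - e i).choose (n + 1) ≤
        Module.finrank K (gradedPiece (jacobianSyzygies f) (e (Fin.last n)))] := by
  tfae_have 1 → 2 := by
    rintro ⟨τ, hτhom, hτli, hτspan⟩ k
    rw [← hτspan, finrank_gradedPiece_span hτhom hτli]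
  tfae_have 2 → 3 := fun h k _ => (h k).ge
  tfae_have 3 → 4 := fun h => h _ le_rfl
  tfae_have 4 → 1 := by
    intro h
    rw [Fin.sum_univ_castSucc, Nat.add_sub_cancel_left, Nat.choose_self] at h
    obtain ⟨v, hv, hvspan⟩ := exists_mem_gradedPiece_notMem_span hhom (Nat.lt_of_succ_le h)
    obtain ⟨hvsyz, hvhom⟩ := mem_gradedPiece.mp hv
    refine hasFreeExponents_of_not_minorsVanish (ρ := Fin.snoc ρ v) hf hred ?_ ?_
      (mt (htame v hvsyz _ hvhom) hvspan)
    · exact Fin.lastCases (by simpa only [Fin.snoc_last] using hvsyz)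
        (by simpa only [Fin.snoc_castSucc] using hρ)
    · exact Fin.lastCases (by simpa only [Fin.snoc_last] using hvhom)
        (by simpa only [Fin.snoc_castSucc] using hhom)
  tfae_finish

end Tame

section Surfaces

theorem arDim_eq_finrank_gradedPiece (f : S4) (k : ℕ) :
    arDim f k = Module.finrank ℂ (gradedPiece (jacobianSyzygies f) k) := rfl

theorem tameFamily_of_tamePair {f : S4} {ρ1 ρ2 : Fin 4 → S4} (h : TamePair f ρ1 ρ2) :
    TameFamily f ![ρ1, ρ2] := by
  intro v hv q hvhom hminors
  have hsnoc : (Fin.snoc ![ρ1, ρ2] v : Fin 3 → Fin 4 → S4) = ![ρ1, ρ2, v] := by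
    ext1 i
    fin_cases i <;> rfl
  rw [hsnoc] at hminors
  obtain ⟨a, b, rfl⟩ := h v hv q hvhom hminors
  rw [range_cons_cons_empty, Submodule.mem_span_pair]
  exact ⟨a, b, rfl⟩

theorem isFreeWith_iff_hasFreeExponents {f : S4} {d1 d2 d3 : ℕ} (h12 : d1 ≤ d2) (h23 : d2 ≤ d3) :
    IsFreeWith f d1 d2 d3 ↔ HasFreeExponents f ![d1, d2, d3] := by
  constructor
  · rintro ⟨-, -, ρ1, ρ2, ρ3, hρ1, hρ2, hρ3, hhom1, hhom2, hhom3, hgen, hind⟩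
    refine ⟨![ρ1, ρ2, ρ3], ?_, ?_, le_antisymm ?_ fun v hv => ?_⟩
    · exact Fin.forall_fin_succ.mpr ⟨hhom1, Fin.forall_fin_two.mpr ⟨hhom2, hhom3⟩⟩
    · refine Fintype.linearIndependent_iff.mpr fun a ha => ?_
      rw [Fin.sum_univ_three] at ha
      obtain ⟨h0, h1, h2⟩ := hind _ _ _ ha
      exact Fin.forall_fin_succ.mpr ⟨h0, Fin.forall_fin_two.mpr ⟨h1, h2⟩⟩
    · rw [Submodule.span_le, Set.range_subset_iff]
      exact Fin.forall_fin_succ.mpr ⟨hρ1, Fin.forall_fin_two.mpr ⟨hρ2, hρ3⟩⟩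
    · obtain ⟨a, b, c, rfl⟩ := hgen v hv
      exact Submodule.mem_span_range_iff_exists_fun _ |>.mpr ⟨![a, b, c], Fin.sum_univ_three _⟩
  · rintro ⟨ρ, hhom, hli, hspan⟩
    have hmem (i : Fin 3) : ρ i ∈ AR4 f := hspan.le (Submodule.subset_span (Set.mem_range_self i))
    refine ⟨h12, h23, ρ 0, ρ 1, ρ 2, hmem 0, hmem 1, hmem 2, hhom 0, hhom 1, hhom 2,
      fun v hv => ?_, fun a b c habc => ?_⟩
    · obtain ⟨a, rfl⟩ := Submodule.mem_span_range_iff_exists_fun _ |>.mp (hspan.ge hv)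
      exact ⟨a 0, a 1, a 2, Fin.sum_univ_three _⟩
    · have hzero := Fintype.linearIndependent_iff.mp hli ![a, b, c]
        ((Fin.sum_univ_three _).trans habc)
      exact ⟨hzero 0, hzero 1, hzero 2⟩

theorem binom3_add_binom3_add_binom3 (k e1 e2 e3 : ℕ) :
    binom3 ((k : ℤ) - e1 + 3) + binom3 ((k : ℤ) - e2 + 3) + binom3 ((k : ℤ) - e3 + 3) =
      ∑ i, (k + 3 - ![e1, e2, e3] i).choose 3 := by
  have binom3_eq (e : ℕ) : binom3 ((k : ℤ) - e + 3) = (k + 3 - e).choose 3 := by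
    rw [binom3, show ((k : ℤ) - e + 3).toNat = k + 3 - e by lia]
  rw [binom3_eq, binom3_eq, binom3_eq, Fin.sum_univ_three]
  rfl

end Surfaces

/-- **Corollary 3.4 (second part).** `D` is free with exponents `e1, e2, e3` iff for all
`k ≥ e3` the dimension `ar(f)_k` is at least the expected free value, and in that case
equality holds for all `k ≥ e3`. -/
theorem cor_3_4_b (f : S4) (d e1 e2 e3 : ℕ) (ρ1 ρ2 : Fin 4 → S4)
    (hd : 1 ≤ d) (hf : f.IsHomogeneous d) (hred : Squarefree f)
    (hmin : MinimalPair f ρ1 ρ2 e1 e2) (htame : TamePair f ρ1 ρ2)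
    (he3 : e1 + e2 + e3 + 1 = d) (he23 : e2 ≤ e3) :
    (IsFreeWith f e1 e2 e3 ↔
      ∀ k : ℕ, e3 ≤ k →
        binom3 ((k : ℤ) - e1 + 3) + binom3 ((k : ℤ) - e2 + 3) + binom3 ((k : ℤ) - e3 + 3) ≤
          arDim f k) ∧
    (IsFreeWith f e1 e2 e3 →
      ∀ k : ℕ, e3 ≤ k →
        arDim f k =
          binom3 ((k : ℤ) - e1 + 3) + binom3 ((k : ℤ) - e2 + 3) +
            binom3 ((k : ℤ) - e3 + 3)) := by
  subst he3
  obtain ⟨hρ1, -, hhom1, -, hρ2, hhom2, he12, -⟩ := hmin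
  have hdeg : f.IsHomogeneous (∑ i, ![e1, e2, e3] i + 1) := by rwa [Fin.sum_univ_three]
  have htfae := cor_3_4_b_general (n := 2) (e := ![e1, e2, e3]) (ρ := ![ρ1, ρ2]) hdeg hred
    (Fin.forall_fin_two.mpr ⟨hρ1, hρ2⟩) (Fin.forall_fin_two.mpr ⟨hhom1, hhom2⟩)
    (tameFamily_of_tamePair htame)
  simp only [isFreeWith_iff_hasFreeExponents he12 he23, arDim_eq_finrank_gradedPiece,
    binom3_add_binom3_add_binom3]
  have hfree_iff_le := htfae.out 0 2
  have hfree_iff_eq := htfae.out 0 1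
  exact ⟨hfree_iff_le, fun hfree k _ => hfree_iff_eq.mp hfree k⟩
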